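/- One has Û₀(τ) = 2πi for all τ ∈ ℍ, and for every integer n ≥ 1 the lowering operator satisfies L(Û_{2n})(τ) = −(π/2) Û_{2n−2}(τ), where Û_{2n}(τ) := 2i ∑_{0≤j≤n} (−1)^{n+j} π^{2n−j+1} U_{2n−2j}(q) / ((2v)^j j! (2n−2j+1)!). -/

import Mathlib

/-!
The lowering operator `L` is a derivation that kills holomorphic functions and satisfies
`L (v⁻ʲ) = -j v^{1-j}`. Since `Û_{2n}` is a polynomial in `1 / (2v)` whose coefficients are
multiples of the `U_{2n-2j}`, the formula for `L (Û_{2n})` follows by comparing coefficients once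
the `U_{2n}` are known to be holomorphic on `ℍ`, that is, once the denominator
`J = ∑ (-1)^j (2j+1) q^{j(j+1)/2}` is known not to vanish there.

The nonvanishing comes from modularity. Up to the factor `2πi`, `J` is the `z`-derivative of the
Jacobi theta function `θ(z, τ)` at its zero `z = (τ + 1) / 2`, so the functional equation of `θ`
shows that `q J⁸` is a cusp form of weight 12 and level one. It is therefore a multiple of `Δ`, the
limits at `i∞` show that the multiple is `1`, and `Δ` has no zero on `ℍ`.
-/

open Complex Filter
open scoped Real

noncomputable section

/-- `q = e^{2πiτ}`. -/
def qq (τ : ℂ) : ℂ := Complex.exp (2 * (π : ℂ) * Complex.I * τ)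

/-- The lowering operator `L = -2iv² ∂/∂τ̄`, where `∂/∂τ̄ = (1/2)(∂/∂u + i ∂/∂v)`. -/
def lowerOp (f : ℂ → ℂ) (τ : ℂ) : ℂ :=
  -2 * Complex.I * (τ.im : ℂ) ^ 2 *
    ((1 / 2 : ℂ) * (fderiv ℝ f τ 1 + Complex.I * fderiv ℝ f τ Complex.I))

/-- Ramanujan's series `U_{2n}(q)`:
numerator `∑_{j≥0} (−1)^j (2j+1)^{2n+1} q^{j(j+1)/2}` divided by
denominator `∑_{j≥0} (−1)^j (2j+1) q^{j(j+1)/2}`. -/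
def Uram (n : ℕ) (q : ℂ) : ℂ :=
  (∑' j : ℕ, (-1 : ℂ) ^ j * ((2 * j + 1 : ℕ) : ℂ) ^ (2 * n + 1) * q ^ (j * (j + 1) / 2)) /
    (∑' j : ℕ, (-1 : ℂ) ^ j * ((2 * j + 1 : ℕ) : ℂ) * q ^ (j * (j + 1) / 2))

/-- The completion
`Û_{2n}(τ) = 2i ∑_{0≤j≤n} (−1)^{n+j} π^{2n−j+1} U_{2n−2j}(q) / ((2v)^j j! (2n−2j+1)!)`. -/
def Uhat (n : ℕ) (τ : ℂ) : ℂ :=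
  2 * Complex.I * ∑ j ∈ Finset.range (n + 1),
    (-1 : ℂ) ^ (n + j) * (π : ℂ) ^ (2 * n - j + 1) * Uram (n - j) (qq τ) /
      ((2 * (τ.im : ℂ)) ^ j * (Nat.factorial j : ℂ) * (Nat.factorial (2 * n - 2 * j + 1) : ℂ))

/-- The numerator series `∑ (-1)^j (2j+1)^k q^{j(j+1)/2}` of Ramanujan's quotients, with the
exponent `k` arbitrary; `U_{2n}` is the quotient of the cases `k = 2n + 1` and `k = 1`. -/
def ramanujanSeries (k : ℕ) (q : ℂ) : ℂ :=
  ∑' j : ℕ, (-1 : ℂ) ^ j * ((2 * j + 1 : ℕ) : ℂ) ^ k * q ^ (j * (j + 1) / 2)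

lemma Uram_eq_div (n : ℕ) (q : ℂ) :
    Uram n q = ramanujanSeries (2 * n + 1) q / ramanujanSeries 1 q := by
  simp only [Uram, ramanujanSeries, pow_one]

lemma summable_odd_pow_mul_pow_triangle (k : ℕ) {r : ℝ} (hr₀ : 0 ≤ r) (hr₁ : r < 1) :
    Summable fun j : ℕ => ((2 * j + 1 : ℕ) : ℝ) ^ k * r ^ (j * (j + 1) / 2) := by
  have odd_pow_isBigO : (fun j : ℕ => (((2 * j + 1) ^ k : ℕ) : ℝ)) =O[atTop]
      fun j : ℕ => ((j ^ k : ℕ) : ℝ) := by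
    refine Asymptotics.IsBigO.of_bound (3 ^ k) ?_
    filter_upwards [eventually_ge_atTop 1] with j hj
    simp only [Real.norm_natCast]
    norm_cast
    rw [← mul_pow]
    gcongr
    omega
  have le_triangle (j : ℕ) : j ≤ j * (j + 1) / 2 := by
    rw [Nat.le_div_iff_mul_le two_pos]
    rcases j.eq_zero_or_pos with rfl | hj
    · rfl
    · gcongr
      omega
  refine (summable_norm_mul_geometric_of_norm_lt_one (r := r)
    (by rwa [Real.norm_of_nonneg hr₀]) odd_pow_isBigO).of_nonneg_of_le
    (fun j => by positivity) fun j => ?_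
  rw [Real.norm_of_nonneg (by positivity), Nat.cast_pow]
  gcongr ?_ * ?_
  exact pow_le_pow_of_le_one hr₀ hr₁.le (le_triangle j)

lemma differentiableAt_ramanujanSeries (k : ℕ) {q : ℂ} (hq : ‖q‖ < 1) :
    DifferentiableAt ℂ (ramanujanSeries k) q := by
  obtain ⟨r, hqr, hr⟩ := exists_between hq
  refine (differentiableOn_tsum_of_summable_norm (U := Metric.ball 0 r)
    (summable_odd_pow_mul_pow_triangle k ((norm_nonneg q).trans hqr.le) hr) (fun j => by fun_prop)
    Metric.isOpen_ball fun j w hw => ?_).differentiableAt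
    (Metric.isOpen_ball.mem_nhds (mem_ball_zero_iff.mpr hqr))
  simp only [norm_mul, norm_pow, norm_neg, norm_one, one_pow, one_mul, Complex.norm_natCast]
  gcongr
  exact (mem_ball_zero_iff.mp hw).le

lemma ramanujanSeries_zero_right (k : ℕ) : ramanujanSeries k 0 = 1 := by
  rw [ramanujanSeries, tsum_eq_single 0]
  · simp
  · intro j hj
    have : j * (j + 1) / 2 ≠ 0 := by
      have : 1 * 2 ≤ j * (j + 1) := Nat.mul_le_mul (by omega) (by omega)
      omega
    simp [this]

lemma norm_qq_lt_one {τ : ℂ} (hτ : 0 < τ.im) : ‖qq τ‖ < 1 := by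
  simpa [qq] using UpperHalfPlane.norm_exp_two_pi_I_lt_one ⟨τ, hτ⟩

lemma differentiable_qq : Differentiable ℂ qq := by
  unfold qq
  fun_prop

lemma differentiableAt_ramanujanSeries_qq (k : ℕ) {τ : ℂ} (hτ : 0 < τ.im) :
    DifferentiableAt ℂ (fun τ => ramanujanSeries k (qq τ)) τ :=
  (differentiableAt_ramanujanSeries k (norm_qq_lt_one hτ)).comp τ (differentiable_qq τ)

/-! ### `J` as a derivative of the Jacobi theta function -/

lemma jacobiTheta₂_one_sub (z τ : ℂ) : jacobiTheta₂ (1 - z) τ = jacobiTheta₂ z τ := by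
  rw [sub_eq_neg_add, jacobiTheta₂_add_left, jacobiTheta₂_neg_left]

lemma jacobiTheta₂'_one_sub (z τ : ℂ) : jacobiTheta₂' (1 - z) τ = -jacobiTheta₂' z τ := by
  rw [sub_eq_neg_add, jacobiTheta₂'_add_left, jacobiTheta₂'_neg_left]

lemma jacobiTheta₂_half_period (τ : ℂ) : jacobiTheta₂ ((τ + 1) / 2) τ = 0 := by
  have h := jacobiTheta₂_add_left' (1 - (τ + 1) / 2) τ
  rw [show 1 - (τ + 1) / 2 + τ = (τ + 1) / 2 by ring, jacobiTheta₂_one_sub,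
    show -π * I * (τ + 2 * (1 - (τ + 1) / 2)) = -(π * I) by ring, exp_neg, exp_pi_mul_I,
    inv_neg_one, neg_one_mul] at h
  exact self_eq_neg.mp h

lemma jacobiTheta₂_term_half_period {n : ℤ} {m : ℕ} (h : n * (n + 1) = 2 * m) (τ : ℂ) :
    jacobiTheta₂_term n ((τ + 1) / 2) τ = (-1) ^ n * qq τ ^ m := by
  have h' : (n : ℂ) * (n + 1) = 2 * m := mod_cast h
  rw [jacobiTheta₂_term, qq, ← exp_nat_mul, ← exp_pi_mul_I, ← exp_int_mul, ← exp_add]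
  congr 1
  linear_combination π * I * τ * h'

lemma jacobiTheta₂'_half_period {τ : ℂ} (hτ : 0 < τ.im) :
    jacobiTheta₂' ((τ + 1) / 2) τ = 2 * π * I * ramanujanSeries 1 (qq τ) := by
  -- The terms of index `j` and `-(j + 1)` carry the same power of `q`, so they are paired.
  rw [← (hasSum_jacobiTheta₂'_term ((τ + 1) / 2) hτ).nat_add_neg_add_one.tsum_eq, ramanujanSeries,
    ← tsum_mul_left]
  refine tsum_congr fun j => ?_
  have triangle : (j : ℤ) * (j + 1) = 2 * (j * (j + 1) / 2 : ℕ) :=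
    mod_cast (Nat.mul_div_cancel' (Nat.even_mul_succ_self j).two_dvd).symm
  have triangle_neg : -((j : ℤ) + 1) * (-(j + 1) + 1) = 2 * (j * (j + 1) / 2 : ℕ) := by
    linear_combination triangle
  have sign_neg : (-1 : ℂ) ^ (-((j : ℤ) + 1)) = -(-1) ^ j := by
    rw [zpow_neg, ← inv_zpow, inv_neg_one, zpow_add_one₀ (by norm_num), zpow_natCast, mul_neg_one]
  rw [jacobiTheta₂'_term, jacobiTheta₂'_term, jacobiTheta₂_term_half_period triangle,
    jacobiTheta₂_term_half_period triangle_neg, sign_neg, zpow_natCast]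
  push_cast
  ring

lemma neg_one_div_im_pos {τ : ℂ} (hτ : 0 < τ.im) : 0 < (-1 / τ).im := by
  simpa [neg_div] using UpperHalfPlane.im_inv_neg_coe_pos ⟨τ, hτ⟩

lemma ramanujanSeries_one_qq_neg_one_div {τ : ℂ} (hτ : 0 < τ.im) :
    ramanujanSeries 1 (qq τ) = -(1 / (-I * τ) ^ (1 / 2 : ℂ) *
      cexp (-π * I * ((τ + 1) / 2) ^ 2 / τ) / τ * ramanujanSeries 1 (qq (-1 / τ))) := by
  have hτ₀ : τ ≠ 0 := UpperHalfPlane.ne_zero ⟨τ, hτ⟩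
  have h := jacobiTheta₂'_functional_equation ((τ + 1) / 2) τ
  rw [show (τ + 1) / 2 / τ = 1 - (-1 / τ + 1) / 2 by field_simp; ring, jacobiTheta₂'_one_sub,
    jacobiTheta₂_one_sub, jacobiTheta₂_half_period, jacobiTheta₂'_half_period hτ,
    jacobiTheta₂'_half_period (neg_one_div_im_pos hτ)] at h
  refine mul_left_cancel₀ two_pi_I_ne_zero ?_
  linear_combination h

/-! ### The identity `q J⁸ = Δ` -/

/-- The function `q J(q)⁸` of `τ`, where `J(q) = ∑ (-1)^j (2j+1) q^{j(j+1)/2}` is the denominator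
of Ramanujan's quotients. Eight is the least power for which the factor `q^{1/8}` that makes `J`
modular is single-valued in `q`. -/
def jacobiPowEight (τ : ℂ) : ℂ := qq τ * ramanujanSeries 1 (qq τ) ^ 8

lemma jacobiPowEight_add_one (τ : ℂ) : jacobiPowEight (τ + 1) = jacobiPowEight τ := by
  have qq_add_one : qq (τ + 1) = qq τ := by
    rw [qq, qq, mul_add, mul_one, exp_periodic]
  rw [jacobiPowEight, qq_add_one, jacobiPowEight]

lemma jacobiPowEight_neg_one_div {τ : ℂ} (hτ : 0 < τ.im) :
    jacobiPowEight (-1 / τ) = τ ^ 12 * jacobiPowEight τ := by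
  have hτ₀ : τ ≠ 0 := UpperHalfPlane.ne_zero ⟨τ, hτ⟩
  have sqrt_pow : ((-I * τ) ^ (1 / 2 : ℂ)) ^ 8 = τ ^ 4 := by
    rw [← cpow_mul_nat, show (1 / 2 : ℂ) * (8 : ℕ) = (4 : ℕ) by norm_num, cpow_natCast, mul_pow,
      (by decide : Even 4).neg_pow, I_pow_four, one_mul]
  have exp_pow : qq τ * cexp (-π * I * ((τ + 1) / 2) ^ 2 / τ) ^ 8 = qq (-1 / τ) := by
    rw [qq, qq, ← exp_nat_mul, ← exp_add, exp_eq_exp_iff_exists_int]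
    refine ⟨-2, ?_⟩
    push_cast
    field_simp
    ring
  rw [jacobiPowEight, jacobiPowEight, ramanujanSeries_one_qq_neg_one_div hτ,
    (by decide : Even 8).neg_pow, mul_pow, div_pow, mul_pow, div_pow, sqrt_pow, ← exp_pow]
  field_simp

section JacobiIdentity

open UpperHalfPlane hiding I
open ModularForm SlashInvariantForm
open scoped MatrixGroups Manifold Topology

lemma qq_coe_eq_qParam (τ : ℍ) : qq τ = Function.Periodic.qParam 1 τ := by
  simp [qq, Function.Periodic.qParam]

lemma tendsto_qq_atImInfty : Tendsto (fun τ : ℍ => qq τ) atImInfty (𝓝 0) := by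
  simpa only [qq_coe_eq_qParam] using qParam_tendsto_atImInfty one_pos

lemma tendsto_ramanujanSeries_qq_atImInfty (k : ℕ) :
    Tendsto (fun τ : ℍ => ramanujanSeries k (qq τ)) atImInfty (𝓝 1) := by
  have h := (differentiableAt_ramanujanSeries k (q := 0) (by simp)).continuousAt.tendsto
  rw [ramanujanSeries_zero_right] at h
  exact h.comp tendsto_qq_atImInfty

lemma jacobiPowEight_slash_S :
    (fun τ : ℍ => jacobiPowEight τ) ∣[(12 : ℤ)] ModularGroup.S = fun τ : ℍ => jacobiPowEight τ := by
  ext τ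
  rw [SL_slash_apply, ModularGroup.denom_S, modular_S_smul, UpperHalfPlane.coe_mk,
    show (-(τ : ℂ))⁻¹ = -1 / τ by rw [inv_neg, neg_div, one_div],
    jacobiPowEight_neg_one_div τ.im_pos, mul_right_comm, zpow_neg, zpow_ofNat,
    mul_inv_cancel₀ (pow_ne_zero _ τ.ne_zero), one_mul]

lemma jacobiPowEight_slash_T :
    (fun τ : ℍ => jacobiPowEight τ) ∣[(12 : ℤ)] ModularGroup.T = fun τ : ℍ => jacobiPowEight τ := by
  ext τ
  have denom_T : denom ModularGroup.T τ = 1 := by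
    rw [ModularGroup.denom_apply]
    simp [ModularGroup.T]
  rw [SL_slash_apply, denom_T, one_zpow, mul_one, modular_T_smul, coe_vadd, ofReal_one, add_comm,
    jacobiPowEight_add_one]

/-- `jacobiPowEight` as a cusp form of weight 12 and level one. -/
def jacobiCuspForm : CuspForm 𝒮ℒ 12 where
  toFun τ := jacobiPowEight τ
  slash_action_eq' A hA := by
    obtain ⟨γ, rfl⟩ := hA
    exact slash_action_generators_SL2Z jacobiPowEight_slash_S jacobiPowEight_slash_T γ
  holo' := by
    rw [UpperHalfPlane.mdifferentiable_iff]
    refine DifferentiableOn.congr (fun z hz => ((differentiable_qq z).mul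
      ((differentiableAt_ramanujanSeries_qq 1 hz).pow 8)).differentiableWithinAt) fun z hz => ?_
    simp [jacobiPowEight, ofComplex_apply_of_im_pos hz]
  zero_at_cusps' hc := by
    rw [Subgroup.IsArithmetic.isCusp_iff_isCusp_SL2Z] at hc
    rw [OnePoint.isZeroAt_iff_forall_SL2Z hc]
    intro γ _
    rw [slash_action_generators_SL2Z jacobiPowEight_slash_S jacobiPowEight_slash_T]
    simpa using! tendsto_qq_atImInfty.mul ((tendsto_ramanujanSeries_qq_atImInfty 1).pow 8)

theorem jacobiPowEight_eq_discriminant (τ : ℍ) : jacobiPowEight τ = discriminant τ := by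
  obtain ⟨c, hc⟩ := CuspForm.exists_smul_discriminant_of_weight_eq_twelve jacobiCuspForm
  have eq_smul (τ : ℍ) : c * discriminant τ = jacobiPowEight τ := DFunLike.congr_fun hc τ
  have eq_mul_prod (τ : ℍ) :
      c * ∏' n, (1 - eta_q n τ) ^ 24 = ramanujanSeries 1 (qq τ) ^ 8 := by
    refine mul_left_cancel₀ (exp_ne_zero (2 * π * I * τ)) ?_
    have h := eq_smul τ
    rw [discriminant_eq_q_prod, ← qq_coe_eq_qParam, mul_left_comm] at h
    exact h
  have c_eq_one : c = 1 := by
    have lim_prod := tendsto_atImInfty_tprod_one_sub_eta_q_pow.const_mul c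
    have lim_series := (tendsto_ramanujanSeries_qq_atImInfty 1).pow 8
    simp only [eq_mul_prod] at lim_prod
    simpa using tendsto_nhds_unique lim_prod lim_series
  rw [← eq_smul, c_eq_one, one_mul]

lemma ramanujanSeries_one_qq_ne_zero {τ : ℂ} (hτ : 0 < τ.im) : ramanujanSeries 1 (qq τ) ≠ 0 := by
  have h : jacobiPowEight τ ≠ 0 :=
    jacobiPowEight_eq_discriminant ⟨τ, hτ⟩ ▸ discriminant_ne_zero ⟨τ, hτ⟩
  exact pow_ne_zero_iff (by norm_num) |>.mp (right_ne_zero_of_mul h)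

end JacobiIdentity

lemma Uram_zero_qq {τ : ℂ} (hτ : 0 < τ.im) : Uram 0 (qq τ) = 1 := by
  rw [Uram_eq_div, mul_zero, zero_add, div_self (ramanujanSeries_one_qq_ne_zero hτ)]

lemma differentiableAt_Uram_qq (n : ℕ) {τ : ℂ} (hτ : 0 < τ.im) :
    DifferentiableAt ℂ (fun τ => Uram n (qq τ)) τ := by
  simp only [Uram_eq_div]
  exact (differentiableAt_ramanujanSeries_qq _ hτ).fun_div
    (differentiableAt_ramanujanSeries_qq 1 hτ) (ramanujanSeries_one_qq_ne_zero hτ)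

/-! ### The lowering operator -/

lemma lowerOp_eq_zero_of_differentiableAt {f : ℂ → ℂ} {τ : ℂ} (hf : DifferentiableAt ℂ f τ) :
    lowerOp f τ = 0 := by
  rw [lowerOp, hf.fderiv_restrictScalars ℝ]
  simp only [ContinuousLinearMap.coe_restrictScalars', fderiv_eq_smul_deriv, smul_eq_mul]
  linear_combination -I * (τ.im : ℂ) ^ 2 * deriv f τ * I_sq

lemma lowerOp_mul {f g : ℂ → ℂ} {τ : ℂ} (hf : DifferentiableAt ℝ f τ)
    (hg : DifferentiableAt ℝ g τ) :
    lowerOp (fun z => f z * g z) τ = f τ * lowerOp g τ + g τ * lowerOp f τ := by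
  simp only [lowerOp, fderiv_fun_mul hf hg, add_apply, smul_apply, smul_eq_mul]
  ring

lemma lowerOp_mul_of_differentiableAt {f g : ℂ → ℂ} {τ : ℂ} (hf : DifferentiableAt ℂ f τ)
    (hg : DifferentiableAt ℝ g τ) :
    lowerOp (fun z => f z * g z) τ = f τ * lowerOp g τ := by
  rw [lowerOp_mul (hf.restrictScalars ℝ) hg, lowerOp_eq_zero_of_differentiableAt hf, mul_zero,
    add_zero]

lemma lowerOp_sum {ι : Type*} {s : Finset ι} {f : ι → ℂ → ℂ} {τ : ℂ}
    (hf : ∀ i ∈ s, DifferentiableAt ℝ (f i) τ) :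
    lowerOp (fun z => ∑ i ∈ s, f i z) τ = ∑ i ∈ s, lowerOp (f i) τ := by
  simp only [lowerOp, fderiv_fun_sum hf, sum_apply, Finset.mul_sum, ← Finset.sum_add_distrib]

lemma lowerOp_comp_im {φ : ℝ → ℂ} {φ' τ : ℂ} (hφ : HasDerivAt φ φ' τ.im) :
    lowerOp (fun z => φ z.im) τ = (τ.im : ℂ) ^ 2 * φ' := by
  have h : HasFDerivAt (fun z : ℂ => φ z.im)
      ((ContinuousLinearMap.toSpanSingleton ℝ φ').comp imCLM) τ :=
    HasFDerivAt.comp τ (f := fun z : ℂ => z.im) hφ.hasFDerivAt imCLM.hasFDerivAt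
  simp only [lowerOp, h.fderiv, ContinuousLinearMap.comp_apply, imCLM_apply, one_im, I_im,
    ContinuousLinearMap.toSpanSingleton_apply, zero_smul, one_smul]
  linear_combination -(τ.im : ℂ) ^ 2 * φ' * I_sq

lemma hasDerivAt_inv_two_mul_ofReal_pow (k : ℕ) {v : ℝ} (hv : v ≠ 0) :
    HasDerivAt (fun v : ℝ => ((2 * (v : ℂ)) ^ k)⁻¹) (-(2 * k) * ((2 * (v : ℂ)) ^ (k + 1))⁻¹) v := by
  have hv' : (v : ℂ) ≠ 0 := mod_cast hv
  have h := (((hasDerivAt_id v).ofReal_comp.const_mul 2).fun_pow k).fun_inv (by simp [hv])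
  refine h.congr_deriv ?_
  cases k with
  | zero => simp
  | succ k =>
    simp only [Nat.cast_add, Nat.cast_one, id_eq, add_tsub_cancel_right, ofReal_one, mul_one]
    field_simp
    ring

lemma differentiableAt_inv_two_mul_im_pow (k : ℕ) {τ : ℂ} (hτ : τ.im ≠ 0) :
    DifferentiableAt ℝ (fun z : ℂ => ((2 * (z.im : ℂ)) ^ k)⁻¹) τ :=
  (hasDerivAt_inv_two_mul_ofReal_pow k hτ).differentiableAt.comp τ imCLM.differentiableAt

lemma lowerOp_inv_two_mul_im_pow_zero (τ : ℂ) :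
    lowerOp (fun z => ((2 * (z.im : ℂ)) ^ 0)⁻¹) τ = 0 := by
  simpa only [pow_zero] using lowerOp_eq_zero_of_differentiableAt (differentiableAt_const _)

lemma lowerOp_inv_two_mul_im_pow_succ (k : ℕ) {τ : ℂ} (hτ : τ.im ≠ 0) :
    lowerOp (fun z => ((2 * (z.im : ℂ)) ^ (k + 1))⁻¹) τ =
      -((k + 1) / 2) * ((2 * (τ.im : ℂ)) ^ k)⁻¹ := by
  have hτ' : (τ.im : ℂ) ≠ 0 := mod_cast hτ
  rw [lowerOp_comp_im (hasDerivAt_inv_two_mul_ofReal_pow (k + 1) hτ)]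
  push_cast
  field_simp
  ring

/-- The coefficient of `(2v)^{-j}` in `Û_{2n}`, a holomorphic function of `τ`. It is used for
`j ≤ n` only, where no subtraction is truncated. -/
def UhatCoeff (n j : ℕ) (τ : ℂ) : ℂ :=
  2 * I * ((-1) ^ (n + j) * (π : ℂ) ^ (2 * n - j + 1) /
    (Nat.factorial j * Nat.factorial (2 * n - 2 * j + 1))) * Uram (n - j) (qq τ)

lemma Uhat_eq_sum (n : ℕ) (τ : ℂ) :
    Uhat n τ = ∑ j ∈ Finset.range (n + 1), UhatCoeff n j τ * ((2 * (τ.im : ℂ)) ^ j)⁻¹ := by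
  rw [Uhat, Finset.mul_sum]
  refine Finset.sum_congr rfl fun j _ => ?_
  simp only [UhatCoeff, div_eq_mul_inv, mul_inv]
  ring

lemma UhatCoeff_zero_zero {τ : ℂ} (hτ : 0 < τ.im) : UhatCoeff 0 0 τ = 2 * π * I := by
  simp only [UhatCoeff, Uram_zero_qq hτ, mul_zero, Nat.sub_zero, zero_add, add_zero, pow_zero,
    pow_one, Nat.factorial_zero, Nat.factorial_one, Nat.cast_one, one_mul, mul_one, div_one]
  ring

lemma differentiableAt_UhatCoeff (n j : ℕ) {τ : ℂ} (hτ : 0 < τ.im) :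
    DifferentiableAt ℂ (UhatCoeff n j) τ :=
  (differentiableAt_Uram_qq (n - j) hτ).const_mul _

lemma succ_mul_UhatCoeff_succ_succ {n j : ℕ} (hj : j ≤ n) (τ : ℂ) :
    (j + 1) * UhatCoeff (n + 1) (j + 1) τ = π * UhatCoeff n j τ := by
  have hj' : (j + 1 : ℂ) ≠ 0 := Nat.cast_add_one_ne_zero j
  simp only [UhatCoeff]
  rw [show n + 1 - (j + 1) = n - j by omega,
    show 2 * (n + 1) - (j + 1) + 1 = 2 * n - j + 1 + 1 by omega,
    show 2 * (n + 1) - 2 * (j + 1) + 1 = 2 * n - 2 * j + 1 by omega, Nat.factorial_succ]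
  push_cast
  field_simp
  ring

lemma lowerOp_Uhat_eq_sum (n : ℕ) {τ : ℂ} (hτ : 0 < τ.im) :
    lowerOp (Uhat n) τ = ∑ j ∈ Finset.range (n + 1),
      UhatCoeff n j τ * lowerOp (fun z => ((2 * (z.im : ℂ)) ^ j)⁻¹) τ := by
  rw [funext (Uhat_eq_sum n), lowerOp_sum fun j _ =>
    ((differentiableAt_UhatCoeff n j hτ).restrictScalars ℝ).fun_mul
      (differentiableAt_inv_two_mul_im_pow j hτ.ne')]
  exact Finset.sum_congr rfl fun j _ => lowerOp_mul_of_differentiableAt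
    (differentiableAt_UhatCoeff n j hτ) (differentiableAt_inv_two_mul_im_pow j hτ.ne')

/-- `Û₀(τ) = 2πi` for all `τ ∈ ℍ`, and for every `n ≥ 1` the lowering
operator satisfies `L(Û_{2n}) = −(π/2)·Û_{2n−2}` on ℍ. -/
theorem Uhat_lowering :
    (∀ τ : ℂ, 0 < τ.im → Uhat 0 τ = 2 * (π : ℂ) * Complex.I) ∧
    (∀ n : ℕ, 1 ≤ n → ∀ τ : ℂ, 0 < τ.im →
      lowerOp (Uhat n) τ = -((π : ℂ) / 2) * Uhat (n - 1) τ) := by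
  constructor
  · intro τ hτ
    rw [Uhat_eq_sum, Finset.sum_range_one, pow_zero, inv_one, mul_one, UhatCoeff_zero_zero hτ]
  · rintro (_ | n) hn τ hτ
    · omega
    rw [Nat.add_sub_cancel, Uhat_eq_sum, lowerOp_Uhat_eq_sum _ hτ, Finset.sum_range_succ',
      lowerOp_inv_two_mul_im_pow_zero, mul_zero, add_zero, Finset.mul_sum]
    refine Finset.sum_congr rfl fun j hj => ?_
    rw [lowerOp_inv_two_mul_im_pow_succ j hτ.ne']
    linear_combination (-1 / 2 * ((2 * (τ.im : ℂ)) ^ j)⁻¹) *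
      succ_mul_UhatCoeff_succ_succ (Finset.mem_range_succ_iff.mp hj) τ
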